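/- arXiv:2503.06240 — 2 statements merged into one kernel-verified Lean document; each statement's English description precedes it below -/
import Mathlib

section
/- (Jing's generalization of Specht's criterion.) Let (A₁,…,A_k) and (B₁,…,B_k) be two k-tuples of real m×n matrices. Then there exist orthogonal matrices O ∈ O(m) and P ∈ O(n) such that Bᵢ = O Aᵢ P for all i = 1,…,k, if and only if Tr(w{Aᵢᵗ Aⱼ : 1 ≤ i, j ≤ k}) = Tr(w{Bᵢᵗ Bⱼ : 1 ≤ i, j ≤ k}) for every word w in the k² noncommuting variables indexed by pairs (i,j). -/
open Matrix

/-!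
The words in a family of matrices closed under conjugate transposition form a representation of a
free monoid on a Euclidean space, and it is semisimple because orthogonal complements of
subrepresentations are subrepresentations. In characteristic zero a finite-dimensional semisimple
representation is determined by its character: two nonzero ones with the same character admit a
nonzero intertwiner, hence have a common nonzero direct summand, and one splits it off. So equality
of the traces of all words in `Aᵢᴴ Aⱼ` and `Bᵢᴴ Bⱼ` yields an invertible `T` with
`T (Aᵢᴴ Aⱼ) = (Bᵢᴴ Bⱼ) T` for all `i, j`. Taking adjoints, `Tᴴ T` commutes with every `Aᵢᴴ Aⱼ`,
hence so does `|T|`, and the unitary `U = T |T|⁻¹` intertwines as well. Now the columns of all the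
`Aᵢ Uᴴ` have the same Gram matrix as the columns of all the `Bᵢ`, so a unitary `O` takes the former
to the latter: `O Aᵢ Uᴴ = Bᵢ`.
-/

section Summands

variable {R M N : Type*} [Ring R] [AddCommGroup M] [Module R M] [AddCommGroup N] [Module R N]

theorem isSemisimpleModule_prod [IsSemisimpleModule R M] [IsSemisimpleModule R N] :
    IsSemisimpleModule R (M × N) :=
  Submodule.topEquiv.isSemisimpleModule_iff.1 <|
    LinearMap.sup_range_inl_inr (R := R) (M := M) (M₂ := N) ▸ .sup (.range _) (.range _)

theorem exists_submodule_linearEquiv_range [IsSemisimpleModule R M] (f : M →ₗ[R] N) :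
    ∃ S : Submodule R M, Nonempty (S ≃ₗ[R] LinearMap.range f) := by
  obtain ⟨S, ⟨e⟩⟩ := IsSemisimpleModule.exists_submodule_linearEquiv_quotient (LinearMap.ker f)
  exact ⟨S, ⟨e.trans f.quotKerEquivRange⟩⟩

end Summands

section Character

variable (K R M N : Type*) [CommRing K] [Ring R] [Algebra K R]
  [AddCommGroup M] [Module K M] [Module R M] [IsScalarTower K R M]
  [AddCommGroup N] [Module K N] [Module R N] [IsScalarTower K R N]

/-- The character of an `R`-module `M` over a `K`-algebra `R`: the trace over `K` of the action of
an element of `R`. It is zero, by convention, if `M` is not finite free over `K`. -/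
noncomputable def moduleCharacter : R →ₗ[K] K :=
  LinearMap.trace K M ∘ₗ (Algebra.lsmul K K M : R →ₐ[K] Module.End K M).toLinearMap

variable {K R M N}

theorem moduleCharacter_apply (r : R) :
    moduleCharacter K R M r = LinearMap.trace K M (Algebra.lsmul K K M r) := rfl

theorem moduleCharacter_congr (e : M ≃ₗ[R] N) : moduleCharacter K R M = moduleCharacter K R N := by
  ext r
  rw [moduleCharacter_apply, moduleCharacter_apply,
    ← LinearMap.trace_conj' _ (e.restrictScalars K)]
  congr 1
  ext n
  simp [LinearEquiv.conj_apply]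

theorem moduleCharacter_prod [Module.Free K M] [Module.Free K N] [Module.Finite K M]
    [Module.Finite K N] :
    moduleCharacter K R (M × N) = moduleCharacter K R M + moduleCharacter K R N := by
  ext r
  exact LinearMap.trace_prodMap' (Algebra.lsmul K K M r) (Algebra.lsmul K K N r)

/- Without intertwiners between `M` and `N`, the projection of `M × N` onto `M` commutes with all
`R`-endomorphisms, so by the density theorem it is the action of an element of `R`. -/
theorem exists_lsmul_eq_one_and_lsmul_eq_zero [Module.Finite K M] [Module.Finite K N]
    [IsSemisimpleModule R M] [IsSemisimpleModule R N]
    (hMN : ∀ f : M →ₗ[R] N, f = 0) (hNM : ∀ g : N →ₗ[R] M, g = 0) :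
    ∃ r : R, Algebra.lsmul K K M r = 1 ∧ Algebra.lsmul K K N r = 0 := by
  let p : Module.End (Module.End R (M × N)) (M × N) :=
    { toFun := fun x ↦ (x.1, 0)
      map_add' := by simp
      map_smul' := fun φ x ↦ by
        have h₁ : (φ (x.1, 0)).2 = 0 :=
          congr($(hMN (LinearMap.snd R M N ∘ₗ φ ∘ₗ LinearMap.inl R M N)) x.1)
        have h₂ : (φ (0, x.2)).1 = 0 :=
          congr($(hNM (LinearMap.fst R M N ∘ₗ φ ∘ₗ LinearMap.inr R M N)) x.2)
        have h₃ : φ x = φ (x.1, 0) + φ (0, x.2) := by rw [← map_add]; simp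
        ext <;> simp [h₁, h₂, h₃] }
  have := isSemisimpleModule_prod (R := R) (M := M) (N := N)
  obtain ⟨s, hs⟩ := Module.Finite.fg_top (R := K) (M := M × N)
  obtain ⟨r, hr⟩ := jacobson_density p s
  have hpr : LinearMap.inl K M N ∘ₗ LinearMap.fst K M N = Algebra.lsmul K K (M × N) r :=
    LinearMap.ext_on hs hr
  exact ⟨r, LinearMap.ext fun m ↦ congr(Prod.fst ($hpr (m, 0))).symm,
    LinearMap.ext fun n ↦ congr(Prod.snd ($hpr (0, n))).symm⟩

end Character

section SemisimpleCharacter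

variable {K R M N : Type*} [Field K] [CharZero K] [Ring R] [Algebra K R]
  [AddCommGroup M] [Module K M] [Module R M] [IsScalarTower K R M] [FiniteDimensional K M]
  [AddCommGroup N] [Module K N] [Module R N] [IsScalarTower K R N] [FiniteDimensional K N]
  [IsSemisimpleModule R M] [IsSemisimpleModule R N]

theorem exists_linearMap_ne_zero_of_moduleCharacter_eq [Nontrivial M]
    (h : moduleCharacter K R M = moduleCharacter K R N) :
    (∃ f : M →ₗ[R] N, f ≠ 0) ∨ ∃ g : N →ₗ[R] M, g ≠ 0 := by
  by_contra! hzero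
  obtain ⟨r, hM, hN⟩ := exists_lsmul_eq_one_and_lsmul_eq_zero (K := K) hzero.1 hzero.2
  have : (Module.finrank K M : K) = 0 := by
    simpa [moduleCharacter_apply, hM, hN] using congr($h r)
  exact Module.finrank_pos.ne' (Nat.cast_eq_zero.1 this)

theorem exists_nontrivial_submodule_linearEquiv_of_moduleCharacter_eq [Nontrivial M]
    (h : moduleCharacter K R M = moduleCharacter K R N) :
    ∃ (S : Submodule R M) (T : Submodule R N), Nontrivial S ∧ Nonempty (S ≃ₗ[R] T) := by
  obtain ⟨f, hf⟩ | ⟨g, hg⟩ := exists_linearMap_ne_zero_of_moduleCharacter_eq h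
  · obtain ⟨S, ⟨e⟩⟩ := exists_submodule_linearEquiv_range f
    have := Submodule.nontrivial_iff_ne_bot.2 (mt LinearMap.range_eq_bot.1 hf)
    exact ⟨S, _, e.toEquiv.nontrivial, ⟨e⟩⟩
  · obtain ⟨T, ⟨e⟩⟩ := exists_submodule_linearEquiv_range g
    exact ⟨_, T, Submodule.nontrivial_iff_ne_bot.2 (mt LinearMap.range_eq_bot.1 hg), ⟨e.symm⟩⟩

theorem nonempty_linearEquiv_of_moduleCharacter_eq
    (h : moduleCharacter K R M = moduleCharacter K R N) : Nonempty (M ≃ₗ[R] N) := by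
  induction hd : Module.finrank K M using Nat.strong_induction_on generalizing M N with
  | _ d ih =>
  have hrank : Module.finrank K M = Module.finrank K N := by
    simpa [moduleCharacter_apply] using congr($h 1)
  cases subsingleton_or_nontrivial M
  · rw [Module.finrank_zero_of_subsingleton, eq_comm, Module.finrank_zero_iff] at hrank
    exact ⟨0⟩
  obtain ⟨S, T, _, ⟨eST⟩⟩ := exists_nontrivial_submodule_linearEquiv_of_moduleCharacter_eq h
  obtain ⟨S', hS⟩ := exists_isCompl S
  obtain ⟨T', hT⟩ := exists_isCompl T
  let eM := S.prodEquivOfIsCompl S' hS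
  let eN := T.prodEquivOfIsCompl T' hT
  have (S : Submodule R M) : FiniteDimensional K S :=
    inferInstanceAs (FiniteDimensional K (S.restrictScalars K))
  have (T : Submodule R N) : FiniteDimensional K T :=
    inferInstanceAs (FiniteDimensional K (T.restrictScalars K))
  have hd' : Module.finrank K S' < d := by
    have hadd := (eM.restrictScalars K).finrank_eq
    rw [Module.finrank_prod] at hadd
    have hpos := Module.finrank_pos (R := K) (M := S)
    omega
  have hST' : moduleCharacter K R S' = moduleCharacter K R T' := by
    rw [← moduleCharacter_congr eM, ← moduleCharacter_congr eN, moduleCharacter_prod,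
      moduleCharacter_prod, moduleCharacter_congr eST] at h
    exact add_left_cancel h
  obtain ⟨e'⟩ := ih _ hd' hST' rfl
  exact ⟨eM.symm.trans ((eST.prodCongr e').trans eN)⟩

end SemisimpleCharacter

section Representation

open Representation

variable {k G V W : Type*} [Field k] [Monoid G] [AddCommGroup V] [Module k V]
  [AddCommGroup W] [Module k W]

theorem moduleCharacter_asModule_single (ρ : Representation k G V) (g : G) (a : k) :
    moduleCharacter k (MonoidAlgebra k G) ρ.asModule (MonoidAlgebra.single g a) =
      a • ρ.character g := by
  have : Algebra.lsmul k k ρ.asModule (MonoidAlgebra.single g a) = a • ρ g :=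
    LinearMap.ext (ρ.single_smul a g)
  rw [moduleCharacter_apply, this]
  exact map_smul _ _ _

theorem nonempty_representationEquiv_of_character_eq [CharZero k] [FiniteDimensional k V]
    [FiniteDimensional k W] {ρ : Representation k G V} {σ : Representation k G W}
    (hρ : ρ.IsSemisimpleRepresentation) (hσ : σ.IsSemisimpleRepresentation)
    (h : ρ.character = σ.character) :
    Nonempty (ρ.Equiv σ) := by
  rw [isSemisimpleRepresentation_iff_isSemisimpleModule_asModule] at hρ hσ
  have h : moduleCharacter k (MonoidAlgebra k G) ρ.asModule =
      moduleCharacter k (MonoidAlgebra k G) σ.asModule := by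
    ext g
    simp [moduleCharacter_asModule_single, h]
  obtain ⟨e⟩ := nonempty_linearEquiv_of_moduleCharacter_eq h
  exact ⟨.mk (e.restrictScalars k)
    ((IntertwiningMap.equivLinearMapAsModule ρ σ).symm e).isIntertwining'⟩

variable {𝕜 E : Type*} [RCLike 𝕜] [NormedAddCommGroup E] [InnerProductSpace 𝕜 E]
  [FiniteDimensional 𝕜 E]

theorem isSemisimpleRepresentation_of_exists_adjoint_eq (ρ : Representation 𝕜 G E)
    (hρ : ∀ g, ∃ h, ρ h = (ρ g).adjoint) : ρ.IsSemisimpleRepresentation where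
  exists_isCompl S := by
    let T : Subrepresentation ρ :=
      { toSubmodule := S.toSubmoduleᗮ
        apply_mem_toSubmodule := fun g v hv u hu ↦ by
          obtain ⟨h, hh⟩ := hρ g
          rw [← LinearMap.adjoint_inner_left, ← hh]
          exact hv _ (S.apply_mem_toSubmodule h hu) }
    exact ⟨T, disjoint_iff.2 <| Subrepresentation.toSubmodule_injective <|
        S.toSubmodule.inf_orthogonal_eq_bot,
      codisjoint_iff.2 <| Subrepresentation.toSubmodule_injective <|
        Submodule.sup_orthogonal_of_hasOrthogonalProjection⟩

end Representation

section Monoid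

variable {M S : Type*} [Monoid M]

theorem semiconjBy_list_prod {u : M} {X Y : S → M}
    (h : ∀ s, SemiconjBy u (X s) (Y s)) (w : List S) :
    SemiconjBy u (w.map X).prod (w.map Y).prod := by
  induction w with
  | nil => simp
  | cons s w ih => simpa using (h s).mul_right ih

theorem semiconjBy_iff_mul_mul_star_eq [StarMul M] {u x y : M}
    (hu : u ∈ unitary M) : SemiconjBy u x y ↔ u * x * star u = y := by
  constructor
  · intro h
    rw [h.eq, mul_assoc, Unitary.mul_star_self_of_mem hu, mul_one]
  · rintro rfl
    rw [SemiconjBy, mul_assoc _ (star u), Unitary.star_mul_self_of_mem hu, mul_one]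

theorem freeMonoid_lift_star_map [StarMul M] {X : S → M} {τ : S → S}
    (hX : ∀ s, X (τ s) = star (X s)) (g : FreeMonoid S) :
    FreeMonoid.lift X (star (FreeMonoid.map τ g)) = star (FreeMonoid.lift X g) := by
  induction g using FreeMonoid.inductionOn with
  | one => simp
  | of s => simp [hX]
  | mul x y hx hy => simp [hx, hy]

end Monoid

section Polar

variable {A : Type*} [Ring A] [StarRing A] [TopologicalSpace A] [IsTopologicalRing A] [T2Space A]
  [Algebra ℝ A] [ContinuousFunctionalCalculus ℝ A IsSelfAdjoint] [PartialOrder A]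
  [StarOrderedRing A] [NonnegSpectrumClass ℝ A]

theorem isUnit_cfcAbs (t : Aˣ) : IsUnit (CFC.abs (t : A)) := by
  rw [← isUnit_mul_self_iff, CFC.abs_mul_abs]
  exact t.isUnit.star.mul t.isUnit

theorem commute_cfcAbs_of_semiconjBy {t x y : A} (h : SemiconjBy t x y)
    (hstar : SemiconjBy t (star x) (star y)) : Commute (CFC.abs t) x := by
  have h' : SemiconjBy (star t) y x := by simpa using hstar.star_star_star
  exact Commute.cfcₙ_nnreal (h'.mul_left h) _

theorem exists_mem_unitary_forall_semiconjBy (t : Aˣ) :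
    ∃ u ∈ unitary A, ∀ x y, SemiconjBy (t : A) x y → SemiconjBy (t : A) (star x) (star y) →
      SemiconjBy u x y := by
  obtain ⟨p, hp⟩ := isUnit_cfcAbs t
  refine ⟨t * ↑p⁻¹, (Units.mul_inv_mem_unitary t p).2 ?_, fun x y h hstar ↦ ?_⟩
  · ext
    simp [hp, CFC.abs_mul_abs, (CFC.abs_nonneg (t : A)).isSelfAdjoint.star_eq]
  · have hpx : Commute (p : A) x := hp ▸ commute_cfcAbs_of_semiconjBy h hstar
    exact h.mul_left hpx.units_inv_left

end Polar

section MatrixRepresentation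

variable {𝕜 G n : Type*} [RCLike 𝕜] [Monoid G] [Fintype n] [DecidableEq n]

/-- The representation of a monoid on `EuclideanSpace 𝕜 n` given by a homomorphism into matrices, so
that conjugate transposes become adjoints. -/
noncomputable def euclideanRep (ρ : G →* Matrix n n 𝕜) : Representation 𝕜 G (EuclideanSpace 𝕜 n) :=
  (toLpLinAlgEquiv 2 : Matrix n n 𝕜 ≃ₐ[𝕜] _).toMonoidHom.comp ρ

theorem euclideanRep_apply (ρ : G →* Matrix n n 𝕜) (g : G) :
    euclideanRep ρ g = toEuclideanLin (ρ g) := rfl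

theorem trace_toEuclideanLin (M : Matrix n n 𝕜) :
    LinearMap.trace 𝕜 _ (toEuclideanLin M) = M.trace := by
  rw [toEuclideanLin, toLpLin_eq_toLin, Matrix.trace_toLin_eq]

theorem isSemisimpleRepresentation_euclideanRep {ρ : G →* Matrix n n 𝕜}
    (hρ : ∀ g, ∃ h, ρ h = (ρ g)ᴴ) : (euclideanRep ρ).IsSemisimpleRepresentation := by
  refine isSemisimpleRepresentation_of_exists_adjoint_eq _ fun g ↦ ?_
  obtain ⟨h, hh⟩ := hρ g
  exact ⟨h, by rw [euclideanRep_apply, hh, toEuclideanLin_conjTranspose_eq_adjoint]; rfl⟩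

theorem exists_units_semiconjBy_of_trace_eq {ρ σ : G →* Matrix n n 𝕜}
    (hρ : ∀ g, ∃ h, ρ h = (ρ g)ᴴ) (hσ : ∀ g, ∃ h, σ h = (σ g)ᴴ)
    (htr : ∀ g, (ρ g).trace = (σ g).trace) :
    ∃ t : (Matrix n n 𝕜)ˣ, ∀ g, SemiconjBy (t : Matrix n n 𝕜) (ρ g) (σ g) := by
  have hchar : (euclideanRep ρ).character = (euclideanRep σ).character :=
    funext fun g ↦ (trace_toEuclideanLin _).trans <| (htr g).trans (trace_toEuclideanLin _).symm
  obtain ⟨e⟩ := nonempty_representationEquiv_of_character_eq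
    (isSemisimpleRepresentation_euclideanRep hρ) (isSemisimpleRepresentation_euclideanRep hσ) hchar
  let φ : Module.End 𝕜 (EuclideanSpace 𝕜 n) ≃ₐ[𝕜] Matrix n n 𝕜 := (toLpLinAlgEquiv 2).symm
  let u := LinearMap.GeneralLinearGroup.ofLinearEquiv e.toLinearEquiv
  refine ⟨Units.map φ u, fun g ↦ ?_⟩
  have hu : SemiconjBy u.val (euclideanRep ρ g) (euclideanRep σ g) := e.isIntertwining' g
  simpa [φ, euclideanRep] using hu.map φ

open scoped MatrixOrder in
theorem exists_mem_unitaryGroup_semiconjBy_of_trace_eq {ρ σ : G →* Matrix n n 𝕜}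
    (hadj : ∀ g, ∃ h, ρ h = (ρ g)ᴴ ∧ σ h = (σ g)ᴴ) (htr : ∀ g, (ρ g).trace = (σ g).trace) :
    ∃ U ∈ unitaryGroup n 𝕜, ∀ g, SemiconjBy U (ρ g) (σ g) := by
  obtain ⟨t, ht⟩ := exists_units_semiconjBy_of_trace_eq
    (fun g ↦ (hadj g).imp fun _ ↦ And.left) (fun g ↦ (hadj g).imp fun _ ↦ And.right) htr
  obtain ⟨U, hU, hUt⟩ := exists_mem_unitary_forall_semiconjBy t
  refine ⟨U, hU, fun g ↦ hUt _ _ (ht g) ?_⟩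
  obtain ⟨h, hρ, hσ⟩ := hadj g
  simpa [star_eq_conjTranspose, hρ, hσ] using ht h

theorem trace_eq_of_semiconjBy {R : Type*} [CommRing R] {U M N : Matrix n n R} (hU : IsUnit U)
    (h : SemiconjBy U M N) : M.trace = N.trace := by
  obtain ⟨u, rfl⟩ := hU
  rw [← trace_units_conj u M, h.eq, Units.mul_inv_cancel_right]

theorem exists_mem_unitaryGroup_semiconjBy_iff_trace_list_prod_eq {S : Type*}
    {X Y : S → Matrix n n 𝕜} {τ : S → S} (hX : ∀ s, X (τ s) = (X s)ᴴ)
    (hY : ∀ s, Y (τ s) = (Y s)ᴴ) :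
    (∃ U ∈ unitaryGroup n 𝕜, ∀ s, SemiconjBy U (X s) (Y s)) ↔
      ∀ w : List S, w ≠ [] → (w.map X).prod.trace = (w.map Y).prod.trace := by
  constructor
  · rintro ⟨U, hU, h⟩ w -
    exact trace_eq_of_semiconjBy (Unitary.isUnit_coe (U := ⟨U, hU⟩)) (semiconjBy_list_prod h w)
  · intro htr
    have htr' (g : FreeMonoid S) : (FreeMonoid.lift X g).trace = (FreeMonoid.lift Y g).trace := by
      obtain rfl | hg := eq_or_ne g 1
      · simp
      · simpa [FreeMonoid.lift_apply] using htr g.toList hg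
    obtain ⟨U, hU, h⟩ := exists_mem_unitaryGroup_semiconjBy_of_trace_eq (fun g ↦
      ⟨_, freeMonoid_lift_star_map hX g, freeMonoid_lift_star_map hY g⟩) htr'
    exact ⟨U, hU, fun s ↦ by simpa using h (.of s)⟩

end MatrixRepresentation

section Gram

variable {𝕜 E V κ ι m n : Type*} [RCLike 𝕜] [NormedAddCommGroup E] [InnerProductSpace 𝕜 E]
  [AddCommGroup V] [Module 𝕜 V]

theorem exists_linearIsometryEquiv_apply_eq [FiniteDimensional 𝕜 E] {f g : V →ₗ[𝕜] E}
    (h : ∀ x, ‖f x‖ = ‖g x‖) : ∃ L : E ≃ₗᵢ[𝕜] E, ∀ x, L (f x) = g x := by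
  obtain ⟨r, hr⟩ := f.rangeRestrict.exists_rightInverse_of_surjective f.range_rangeRestrict
  have hfr (y : LinearMap.range f) : f (r y) = y := congr(Subtype.val ($hr y))
  let L : LinearMap.range f →ₗᵢ[𝕜] E :=
    { toLinearMap := g ∘ₗ r
      norm_map' := fun y ↦ by rw [LinearMap.comp_apply, ← h, hfr, Submodule.coe_norm] }
  refine ⟨L.extend.toLinearIsometryEquiv rfl, fun x ↦ ?_⟩
  have hLx : L.extend (f x) = g (r ⟨f x, x, rfl⟩) := L.extend_apply ⟨f x, x, rfl⟩
  -- `r (f x)` and `x` have the same image under `f`, hence under `g`, because `g` kills `ker f`.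
  rw [LinearIsometry.coe_toLinearIsometryEquiv, hLx, ← sub_eq_zero, ← map_sub, ← norm_eq_zero, ← h,
    map_sub, hfr, sub_self, norm_zero]

theorem norm_linearCombination_eq_of_gram_eq {v w : κ → E} (h : gram 𝕜 v = gram 𝕜 w)
    (c : κ →₀ 𝕜) : ‖Finsupp.linearCombination 𝕜 v c‖ = ‖Finsupp.linearCombination 𝕜 w c‖ := by
  have hinner (i j : κ) : inner 𝕜 (v i) (v j) = inner 𝕜 (w i) (w j) := congr($h i j)
  simp only [norm_eq_sqrt_re_inner (𝕜 := 𝕜), Finsupp.linearCombination_apply, Finsupp.sum,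
    sum_inner, inner_sum, _root_.inner_smul_left, _root_.inner_smul_right, hinner]

theorem exists_linearIsometryEquiv_of_gram_eq [FiniteDimensional 𝕜 E] {v w : κ → E}
    (h : gram 𝕜 v = gram 𝕜 w) : ∃ L : E ≃ₗᵢ[𝕜] E, ∀ i, L (v i) = w i := by
  obtain ⟨L, hL⟩ := exists_linearIsometryEquiv_apply_eq (norm_linearCombination_eq_of_gram_eq h)
  exact ⟨L, fun i ↦ by simpa using hL (.single i 1)⟩

theorem exists_mem_unitaryGroup_mul_eq_iff [Fintype m] [DecidableEq m]
    {A B : ι → Matrix m n 𝕜} :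
    (∃ U ∈ unitaryGroup m 𝕜, ∀ i, U * A i = B i) ↔ ∀ i j, (A i)ᴴ * A j = (B i)ᴴ * B j := by
  refine ⟨fun ⟨U, hU, hUA⟩ i j ↦ ?_, fun h ↦ ?_⟩
  · have hU : Uᴴ * U = 1 := mem_unitaryGroup_iff'.1 hU
    rw [← hUA, ← hUA, conjTranspose_mul, Matrix.mul_assoc, ← Matrix.mul_assoc Uᴴ, hU,
      Matrix.one_mul]
  let column (A : ι → Matrix m n 𝕜) (s : ι × n) : EuclideanSpace 𝕜 m :=
    WithLp.toLp 2 ((A s.1).col s.2)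
  have hgram : gram 𝕜 (column A) = gram 𝕜 (column B) := by
    ext s t
    simpa [column, gram_apply, EuclideanSpace.inner_eq_star_dotProduct, mul_apply, dotProduct,
      mul_comm] using congr($(h s.1 t.1) s.2 t.2)
  obtain ⟨L, hL⟩ := exists_linearIsometryEquiv_of_gram_eq hgram
  let φ : Matrix m m 𝕜 ≃⋆ₐ[𝕜] (EuclideanSpace 𝕜 m →L[𝕜] EuclideanSpace 𝕜 m) := toEuclideanCLM
  let u := Unitary.linearIsometryEquiv.symm L
  refine ⟨φ.symm u, Unitary.map_mem φ.symm u.2, fun i ↦ ?_⟩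
  ext a c
  have hcol : φ (φ.symm u) (column A (i, c)) = column B (i, c) := by
    rw [StarAlgEquiv.apply_symm_apply]
    exact hL (i, c)
  exact congr($hcol a)

theorem exists_mem_unitaryGroup_eq_mul_mul_iff_semiconjBy [Fintype m] [DecidableEq m] [Fintype n]
    [DecidableEq n] {A B : ι → Matrix m n 𝕜} {P : Matrix n n 𝕜} (hP : P ∈ unitaryGroup n 𝕜) :
    (∃ O ∈ unitaryGroup m 𝕜, ∀ i, B i = O * A i * P) ↔
      ∀ s : ι × ι, SemiconjBy (star P) ((A s.1)ᴴ * A s.2) ((B s.1)ᴴ * B s.2) := by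
  simp_rw [semiconjBy_iff_mul_mul_star_eq (Unitary.star_mem hP), star_star, Prod.forall,
    Matrix.mul_assoc, eq_comm (a := B _), exists_mem_unitaryGroup_mul_eq_iff, conjTranspose_mul,
    star_eq_conjTranspose, Matrix.mul_assoc]

end Gram

theorem jing_specht_criterion_general {𝕜 ι m n : Type*} [RCLike 𝕜] [Fintype m] [DecidableEq m]
    [Fintype n] [DecidableEq n] (A B : ι → Matrix m n 𝕜) :
    (∃ O ∈ unitaryGroup m 𝕜, ∃ P ∈ unitaryGroup n 𝕜, ∀ i, B i = O * A i * P) ↔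
      ∀ w : List (ι × ι), w ≠ [] →
        (w.map fun s ↦ (A s.1)ᴴ * A s.2).prod.trace =
          (w.map fun s ↦ (B s.1)ᴴ * B s.2).prod.trace := by
  rw [← exists_mem_unitaryGroup_semiconjBy_iff_trace_list_prod_eq (τ := Prod.swap)
    (by simp) (by simp)]
  constructor
  · rintro ⟨O, hO, P, hP, hB⟩
    exact ⟨star P, Unitary.star_mem hP,
      (exists_mem_unitaryGroup_eq_mul_mul_iff_semiconjBy hP).1 ⟨O, hO, hB⟩⟩
  · rintro ⟨U, hU, hUA⟩
    obtain ⟨O, hO, hB⟩ :=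
      (exists_mem_unitaryGroup_eq_mul_mul_iff_semiconjBy (Unitary.star_mem hU)).2 <| by
        simpa using hUA
    exact ⟨O, hO, star U, Unitary.star_mem hU, hB⟩

/-- Jing's generalization of Specht's criterion: two `k`-tuples of real `m×n`
matrices satisfy `Bᵢ = O Aᵢ P` for orthogonal `O, P` iff all trace identities
`Tr(w{AᵢᵗAⱼ}) = Tr(w{BᵢᵗBⱼ})` hold, for words `w` in the `k²` noncommuting
variables indexed by pairs `(i,j)`. -/
theorem jing_specht_criterion
    (m n k : ℕ)
    (A B : Fin k → Matrix (Fin m) (Fin n) ℝ) :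
    (∃ (O : Matrix (Fin m) (Fin m) ℝ) (P : Matrix (Fin n) (Fin n) ℝ),
        O * Oᵀ = 1 ∧ P * Pᵀ = 1 ∧ ∀ i, B i = O * A i * P) ↔
    (∀ w : List (Fin k × Fin k), w ≠ [] →
        ((w.map fun s => (A s.1)ᵀ * A s.2).prod).trace
          = ((w.map fun s => (B s.1)ᵀ * B s.2).prod).trace) := by
  simpa [mem_unitaryGroup_iff, star_eq_conjTranspose, conjTranspose_eq_transpose_of_trivial,
    ← exists_and_left] using jing_specht_criterion_general A B
end

section
/- (Specht's criterion, real version.) Let A and B be real n×n matrices. Then there exists an orthogonal matrix O ∈ O(n) with B = Oᵗ A O if and only if Tr(w(A, Aᵗ)) = Tr(w(B, Bᵗ)) for every word w(x,y) in two noncommuting variables, i.e. for every nonempty finite sequence ε₁,…,ε_L ∈ {1,2}, Tr(C_{ε₁}⋯C_{ε_L}) = Tr(D_{ε₁}⋯D_{ε_L}) where C₁ = A, C₂ = Aᵗ, D₁ = B, D₂ = Bᵗ. -/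
open Matrix

/-!
The trace is invariant under conjugation, which gives one direction. Conversely, the two
projections of the ⋆-algebra generated by the pair `(A, B)` are ⋆-representations whose characters
agree, because words in the generator and its adjoint span that algebra. It remains to see that
finite-dimensional ⋆-representations `ρ`, `σ` with equal characters are unitarily equivalent.

Equal characters force equal kernels, since `Tr (ρ (a⋆ a))` is the squared Hilbert–Schmidt norm of
`ρ a`. Choose `p` with `ρ p ≠ 0` and `ker (ρ p)` maximal. For self-adjoint `a`, some combination
`p⋆ a p - μ p⋆ p` has a larger kernel under `ρ`, so it vanishes under `ρ` and therefore also under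
`σ`. Taking `a = x⋆ x` shows that `‖ρ x v‖² = μ ‖v‖²` for every `v` in the range of `ρ p`, and
likewise for `σ`, with the same `μ`. Hence `ρ x v ↦ σ x w` is an isometry of cyclic
subrepresentations, where `v` and `w` are unit vectors in the ranges of `ρ p` and `σ p`. The
characters on the orthogonal complements again agree, and one concludes by induction on the
dimension.
-/

open Module

open scoped ComplexOrder InnerProductSpace

section LinearAlgebra

variable {𝕜 V W : Type*} [RCLike 𝕜]
  [NormedAddCommGroup V] [InnerProductSpace 𝕜 V] [NormedAddCommGroup W] [InnerProductSpace 𝕜 W]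

theorem exists_norm_apply_eq_one {f : V →ₗ[𝕜] W} (hf : f ≠ 0) : ∃ x, ‖f x‖ = 1 := by
  obtain ⟨x, hx⟩ := DFunLike.ne_iff.1 hf
  refine ⟨(‖f x‖⁻¹ : 𝕜) • x, ?_⟩
  rw [map_smul]
  exact norm_smul_inv_norm hx

theorem exists_linearIsometryEquiv_range {M : Type*} [AddCommGroup M] [Module 𝕜 M]
    {F : M →ₗ[𝕜] V} {G : M →ₗ[𝕜] W} (h : ∀ a, ‖F a‖ = ‖G a‖) :
    ∃ e : LinearMap.range F ≃ₗᵢ[𝕜] LinearMap.range G,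
      ∀ a, e (F.rangeRestrict a) = G.rangeRestrict a := by
  have hker : LinearMap.ker F = LinearMap.ker G := by
    ext a
    rw [LinearMap.mem_ker, LinearMap.mem_ker, ← norm_eq_zero, h, norm_eq_zero]
  let e : LinearMap.range F ≃ₗ[𝕜] LinearMap.range G :=
    F.quotKerEquivRange.symm ≪≫ₗ Submodule.quotEquivOfEq _ _ hker ≪≫ₗ G.quotKerEquivRange
  have he (a : M) : e (F.rangeRestrict a) = G.rangeRestrict a := by
    have : F.quotKerEquivRange.symm (F.rangeRestrict a) = (LinearMap.ker F).mkQ a :=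
      F.quotKerEquivRange.symm_apply_eq.2 rfl
    simp only [e, LinearEquiv.trans_apply, this]
    rfl
  refine ⟨⟨e, fun x => ?_⟩, he⟩
  obtain ⟨a, rfl⟩ := F.surjective_rangeRestrict x
  rw [he]
  exact (h a).symm

variable [FiniteDimensional 𝕜 V]

theorem trace_eq_trace_restrict_add_trace_restrict_orthogonal {f : End 𝕜 V} {U : Submodule 𝕜 V}
    (hU : ∀ x ∈ U, f x ∈ U) (hU' : ∀ x ∈ Uᗮ, f x ∈ Uᗮ) :
    LinearMap.trace 𝕜 V f =
      LinearMap.trace 𝕜 U (f.restrict hU) + LinearMap.trace 𝕜 Uᗮ (f.restrict hU') := by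
  let e := U.prodEquivOfIsCompl Uᗮ U.isCompl_orthogonal
  have hconj : e.conj ((f.restrict hU).prodMap (f.restrict hU')) = f := by
    ext x
    obtain ⟨y, rfl⟩ := e.surjective x
    simp [LinearEquiv.conj_apply, e]
  rw [← LinearMap.trace_prodMap', ← LinearMap.trace_conj' _ e, hconj]

theorem trace_toMatrixOrthonormal {ι : Type*} [Fintype ι] [DecidableEq ι]
    (b : OrthonormalBasis ι 𝕜 V) (f : End 𝕜 V) :
    (LinearMap.toMatrixOrthonormal b f).trace = LinearMap.trace 𝕜 V f :=
  (LinearMap.trace_eq_matrix_trace 𝕜 b.toBasis f).symm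

theorem trace_star_mul_self_eq_zero_iff {f : End 𝕜 V} :
    LinearMap.trace 𝕜 V (star f * f) = 0 ↔ f = 0 := by
  rw [← trace_toMatrixOrthonormal (stdOrthonormalBasis 𝕜 V), map_mul, map_star,
    star_eq_conjTranspose, trace_conjTranspose_mul_self_eq_zero_iff, EmbeddingLike.map_eq_zero_iff]

variable [FiniteDimensional 𝕜 W]

-- `p v` is an eigenvector of the compression of `b` to the range of `p`.
theorem exists_adjoint_conj_apply_eq_smul {p : V →ₗ[𝕜] W} {b : End 𝕜 W} (hp : p ≠ 0)
    (hb : b.IsSymmetric) :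
    ∃ (μ : ℝ) (v : V), p v ≠ 0 ∧ p.adjoint (b (p v)) = (μ : 𝕜) • p.adjoint (p v) := by
  let ι := (LinearMap.range p).subtype
  have hc : (ι.adjoint ∘ₗ b ∘ₗ ι).IsSymmetric := hb.adjoint_conj ι
  have : Nontrivial (LinearMap.range p) :=
    Submodule.nontrivial_iff_ne_bot.2 (LinearMap.range_eq_bot.not.2 hp)
  let i : Fin (finrank 𝕜 (LinearMap.range p)) := ⟨0, finrank_pos⟩
  obtain ⟨u, hu⟩ : ∃ u, u = hc.eigenvectorBasis rfl i := ⟨_, rfl⟩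
  have hu0 : u ≠ 0 := hu ▸ (hc.eigenvectorBasis rfl).orthonormal.ne_zero i
  have heigen : ι.adjoint (b u) = (hc.eigenvalues rfl i : 𝕜) • u :=
    hu ▸ hc.apply_eigenvectorBasis rfl i
  obtain ⟨_, v, rfl⟩ := u
  refine ⟨hc.eigenvalues rfl i, v, fun h => hu0 (Subtype.ext h), ext_inner_left 𝕜 fun y => ?_⟩
  have := congrArg (fun z => ⟪p.rangeRestrict y, z⟫_𝕜) heigen
  rw [LinearMap.adjoint_inner_right, inner_smul_right] at this
  rw [LinearMap.adjoint_inner_right, inner_smul_right, LinearMap.adjoint_inner_right]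
  exact this

end LinearAlgebra

section StarRepresentation

universe u v

variable {𝕜 R : Type*} [RCLike 𝕜] [Ring R] [StarRing R] [Algebra 𝕜 R]
variable {V : Type u} [NormedAddCommGroup V] [InnerProductSpace 𝕜 V] [FiniteDimensional 𝕜 V]
variable {W : Type v} [NormedAddCommGroup W] [InnerProductSpace 𝕜 W] [FiniteDimensional 𝕜 W]
variable {ρ : R →⋆ₐ[𝕜] End 𝕜 V} {σ : R →⋆ₐ[𝕜] End 𝕜 W}

theorem inner_apply_apply (ρ : R →⋆ₐ[𝕜] End 𝕜 V) (a b : R) (x y : V) :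
    ⟪ρ a x, ρ b y⟫_𝕜 = ⟪x, ρ (star a * b) y⟫_𝕜 := by
  rw [map_mul, map_star, LinearMap.star_eq_adjoint, End.mul_apply, LinearMap.adjoint_inner_right]

/-- Unitary equivalence of ⋆-representations: an isometry of the underlying spaces intertwines
the actions. -/
def UnitarilyEquivalent (ρ : R →⋆ₐ[𝕜] End 𝕜 V) (σ : R →⋆ₐ[𝕜] End 𝕜 W) : Prop :=
  ∃ e : V ≃ₗᵢ[𝕜] W, ∀ a x, e (ρ a x) = σ a (e x)

theorem UnitarilyEquivalent.trace_eq (h : UnitarilyEquivalent ρ σ) (a : R) :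
    LinearMap.trace 𝕜 V (ρ a) = LinearMap.trace 𝕜 W (σ a) := by
  obtain ⟨e, he⟩ := h
  have hconj : e.toLinearEquiv.conj (ρ a) = σ a := by
    ext y
    simp [LinearEquiv.conj_apply, he]
  rw [← hconj, LinearMap.trace_conj']

theorem map_eq_zero_iff_of_trace_eq
    (h : ∀ a, LinearMap.trace 𝕜 V (ρ a) = LinearMap.trace 𝕜 W (σ a)) (a : R) :
    ρ a = 0 ↔ σ a = 0 := by
  rw [← trace_star_mul_self_eq_zero_iff, ← trace_star_mul_self_eq_zero_iff (f := σ a), ← map_star,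
    ← map_star, ← map_mul, ← map_mul, h]

/-- `U` is stable under every operator of the representation `ρ`. -/
def IsInvariantSubspace (ρ : R →⋆ₐ[𝕜] End 𝕜 V) (U : Submodule 𝕜 V) : Prop :=
  ∀ a, ∀ x ∈ U, ρ a x ∈ U

namespace IsInvariantSubspace

variable {U : Submodule 𝕜 V}

theorem orthogonal (hU : IsInvariantSubspace ρ U) : IsInvariantSubspace ρ Uᗮ := by
  intro a x hx u hu
  have := hx _ (hU (star a) u hu)
  rwa [map_star, LinearMap.star_eq_adjoint, LinearMap.adjoint_inner_left] at this

/-- The restriction of a ⋆-representation to an invariant subspace. -/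
noncomputable def subrep (hU : IsInvariantSubspace ρ U) : R →⋆ₐ[𝕜] End 𝕜 U where
  toFun a := (ρ a).restrict (hU a)
  map_one' := by ext; simp
  map_mul' a b := by ext; simp
  map_zero' := by ext; simp
  map_add' a b := by ext; simp
  commutes' c := by ext; simp [AlgHomClass.commutes]
  map_star' a := by
    rw [LinearMap.star_eq_adjoint, LinearMap.eq_adjoint_iff]
    intro x y
    simp [map_star, LinearMap.star_eq_adjoint, LinearMap.adjoint_inner_left]

@[simp]
theorem coe_subrep_apply (hU : IsInvariantSubspace ρ U) (a : R) (x : U) :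
    (hU.subrep a x : V) = ρ a x := rfl

theorem trace_eq_add (hU : IsInvariantSubspace ρ U) (a : R) :
    LinearMap.trace 𝕜 V (ρ a) =
      LinearMap.trace 𝕜 U (hU.subrep a) + LinearMap.trace 𝕜 Uᗮ (hU.orthogonal.subrep a) :=
  trace_eq_trace_restrict_add_trace_restrict_orthogonal (hU a) (hU.orthogonal a)

end IsInvariantSubspace

theorem UnitarilyEquivalent.of_subrep {U : Submodule 𝕜 V} {U' : Submodule 𝕜 W}
    {hU : IsInvariantSubspace ρ U} {hU' : IsInvariantSubspace σ U'}
    (h : UnitarilyEquivalent hU.subrep hU'.subrep)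
    (h' : UnitarilyEquivalent hU.orthogonal.subrep hU'.orthogonal.subrep) :
    UnitarilyEquivalent ρ σ := by
  obtain ⟨e, he⟩ := h
  obtain ⟨e', he'⟩ := h'
  let E : V ≃ₗᵢ[𝕜] W := U.orthogonalDecomposition.trans
    ((LinearIsometryEquiv.withLpProdCongr 2 e e').trans U'.orthogonalDecomposition.symm)
  have hE (x : U) (y : Uᗮ) : E (x + y) = e x + e' y := by
    simp [E, Submodule.orthogonalProjectionOnto_apply_of_mem_orthogonal y.2]
  refine ⟨E, fun a z => ?_⟩
  obtain ⟨x, hx, y, hy, rfl⟩ := U.exists_add_mem_mem_orthogonal z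
  lift x to U using hx
  lift y to Uᗮ using hy
  calc E (ρ a (x + y)) = E (hU.subrep a x + hU.orthogonal.subrep a y) := by rw [map_add]; rfl
    _ = σ a (E (x + y)) := by rw [hE, he, he', hE, map_add]; rfl

/-- The linear map `a ↦ ρ a v`; its range is the cyclic subspace generated by `v`. -/
def orbitMap (ρ : R →⋆ₐ[𝕜] End 𝕜 V) (v : V) : R →ₗ[𝕜] V :=
  LinearMap.applyₗ v ∘ₗ ρ.toAlgHom.toLinearMap

@[simp]
theorem orbitMap_apply (ρ : R →⋆ₐ[𝕜] End 𝕜 V) (v : V) (a : R) : orbitMap ρ v a = ρ a v := rfl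

theorem isInvariantSubspace_range_orbitMap (ρ : R →⋆ₐ[𝕜] End 𝕜 V) (v : V) :
    IsInvariantSubspace ρ (LinearMap.range (orbitMap ρ v)) := by
  rintro a _ ⟨b, rfl⟩
  exact ⟨a * b, by simp⟩

theorem mem_range_orbitMap_self (ρ : R →⋆ₐ[𝕜] End 𝕜 V) (v : V) :
    v ∈ LinearMap.range (orbitMap ρ v) :=
  ⟨1, by simp⟩

theorem unitarilyEquivalent_subrep_range_orbitMap {v : V} {w : W} (h : ∀ a, ‖ρ a v‖ = ‖σ a w‖) :
    UnitarilyEquivalent (isInvariantSubspace_range_orbitMap ρ v).subrep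
      (isInvariantSubspace_range_orbitMap σ w).subrep := by
  obtain ⟨e, he⟩ := exists_linearIsometryEquiv_range (F := orbitMap ρ v) (G := orbitMap σ w) h
  refine ⟨e, fun a x => ?_⟩
  obtain ⟨b, rfl⟩ := (orbitMap ρ v).surjective_rangeRestrict x
  have hρ : (isInvariantSubspace_range_orbitMap ρ v).subrep a ((orbitMap ρ v).rangeRestrict b) =
      (orbitMap ρ v).rangeRestrict (a * b) := by
    ext
    simp
  rw [hρ, he, he]
  ext
  simp

theorem finrank_orthogonal_range_orbitMap_lt (ρ : R →⋆ₐ[𝕜] End 𝕜 V) {v : V} (hv : v ≠ 0) :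
    finrank 𝕜 (LinearMap.range (orbitMap ρ v))ᗮ < finrank 𝕜 V := by
  have : Nontrivial (LinearMap.range (orbitMap ρ v)) :=
    nontrivial_of_ne ⟨v, mem_range_orbitMap_self ρ v⟩ 0 (Subtype.coe_ne_coe.1 hv)
  have hsum := (LinearMap.range (orbitMap ρ v)).finrank_add_finrank_orthogonal
  have hpos := finrank_pos (R := 𝕜) (M := LinearMap.range (orbitMap ρ v))
  lia

-- Such a `p` replaces a minimal projection of the algebra `ρ(R)`.
theorem exists_map_star_mul_mul_eq_smul [Nontrivial V] (ρ : R →⋆ₐ[𝕜] End 𝕜 V) :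
    ∃ p : R, ρ p ≠ 0 ∧
      ∀ a, IsSelfAdjoint a → ∃ μ : ℝ, ρ (star p * a * p - (μ : 𝕜) • (star p * p)) = 0 := by
  obtain ⟨p, hp, hmax⟩ := exists_maximalFor_of_wellFoundedGT (fun q : R => ρ q ≠ 0)
    (fun q => LinearMap.ker (ρ q)) ⟨1, by simp⟩
  refine ⟨p, hp, fun a ha => ?_⟩
  obtain ⟨μ, v, hv, hμ⟩ := exists_adjoint_conj_apply_eq_smul hp
    ((LinearMap.isSymmetric_iff_isSelfAdjoint _).2 (ha.map ρ))
  refine ⟨μ, by_contra fun hq => hv ?_⟩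
  have happ (x : V) : ρ (star p * a * p - (μ : 𝕜) • (star p * p)) x =
      (ρ p).adjoint (ρ a (ρ p x)) - (μ : 𝕜) • (ρ p).adjoint (ρ p x) := by
    simp [map_star, LinearMap.star_eq_adjoint]
  have hle : LinearMap.ker (ρ p) ≤
      LinearMap.ker (ρ (star p * a * p - (μ : 𝕜) • (star p * p))) := fun x hx => by
    rw [LinearMap.mem_ker] at hx ⊢
    rw [happ, hx, map_zero, map_zero, smul_zero, sub_zero]
  exact hmax hq hle (by rw [LinearMap.mem_ker, happ, hμ, sub_self])

theorem norm_sq_apply_of_map_star_mul_mul_eq_smul {p a : R} {μ : ℝ}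
    (h : ρ (star p * (star a * a) * p - (μ : 𝕜) • (star p * p)) = 0) (x : V) :
    ‖ρ a (ρ p x)‖ ^ 2 = μ * ‖ρ p x‖ ^ 2 := by
  have h' : ρ (star (a * p) * (a * p)) = (μ : 𝕜) • ρ (star p * p) := by
    rw [← map_smul, ← sub_eq_zero, ← map_sub, ← h, star_mul]
    simp only [mul_assoc]
  have hinner : ⟪ρ (a * p) x, ρ (a * p) x⟫_𝕜 = μ * ⟪ρ p x, ρ p x⟫_𝕜 := by
    rw [inner_apply_apply, inner_apply_apply, h', LinearMap.smul_apply, inner_smul_right]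
  rw [inner_self_eq_norm_sq_to_K, inner_self_eq_norm_sq_to_K, map_mul, End.mul_apply] at hinner
  exact_mod_cast hinner

theorem exists_norm_apply_eq_norm_apply_of_trace_eq [Nontrivial V]
    (h : ∀ a, LinearMap.trace 𝕜 V (ρ a) = LinearMap.trace 𝕜 W (σ a)) :
    ∃ (v : V) (w : W), v ≠ 0 ∧ ∀ a, ‖ρ a v‖ = ‖σ a w‖ := by
  obtain ⟨p, hρp, hp⟩ := exists_map_star_mul_mul_eq_smul ρ
  have hker := map_eq_zero_iff_of_trace_eq h
  obtain ⟨x, hx⟩ := exists_norm_apply_eq_one hρp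
  obtain ⟨y, hy⟩ := exists_norm_apply_eq_one ((hker p).not.1 hρp)
  refine ⟨ρ p x, σ p y, norm_ne_zero_iff.1 (hx ▸ one_ne_zero), fun a => ?_⟩
  obtain ⟨μ, hμ⟩ := hp (star a * a) (.star_mul_self a)
  rw [← sq_eq_sq₀ (norm_nonneg _) (norm_nonneg _), norm_sq_apply_of_map_star_mul_mul_eq_smul hμ,
    norm_sq_apply_of_map_star_mul_mul_eq_smul ((hker _).1 hμ), hx, hy]

theorem unitarilyEquivalent_of_trace_eq
    (h : ∀ a, LinearMap.trace 𝕜 V (ρ a) = LinearMap.trace 𝕜 W (σ a)) :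
    UnitarilyEquivalent ρ σ := by
  induction hd : finrank 𝕜 V using Nat.strong_induction_on generalizing V W with
  | _ d ih =>
  rcases subsingleton_or_nontrivial V with hV | hV
  · have : Subsingleton W := by
      have hone : σ 1 = 0 := (map_eq_zero_iff_of_trace_eq h 1).1 (Subsingleton.elim _ _)
      exact subsingleton_of_forall_eq 0 fun y => by simpa using DFunLike.congr_fun hone y
    exact ⟨{ (0 : V ≃ₗ[𝕜] W) with norm_map' := fun x => by simp [Subsingleton.elim x 0] },
      fun a x => Subsingleton.elim _ _⟩
  obtain ⟨v, w, hv, hvw⟩ := exists_norm_apply_eq_norm_apply_of_trace_eq h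
  have hcyclic := unitarilyEquivalent_subrep_range_orbitMap hvw
  refine hcyclic.of_subrep (ih _ (hd ▸ finrank_orthogonal_range_orbitMap_lt ρ hv) (fun a => ?_) rfl)
  have hsum := h a
  rwa [(isInvariantSubspace_range_orbitMap ρ v).trace_eq_add,
    (isInvariantSubspace_range_orbitMap σ w).trace_eq_add, hcyclic.trace_eq, add_right_inj] at hsum

end StarRepresentation

section Matrix

variable {𝕜 n : Type*} [RCLike 𝕜] [Fintype n] [DecidableEq n]

theorem exists_unitary_conj_of_trace_eq {R : Type*} [Ring R] [StarRing R] [Algebra 𝕜 R]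
    (φ ψ : R →⋆ₐ[𝕜] Matrix n n 𝕜) (h : ∀ a, (φ a).trace = (ψ a).trace) :
    ∃ U ∈ unitaryGroup n 𝕜, ∀ a, ψ a = star U * φ a * U := by
  let Φ := LinearMap.toMatrixOrthonormal (EuclideanSpace.basisFun n 𝕜)
  let ρ := (Φ.symm : Matrix n n 𝕜 →⋆ₐ[𝕜] End 𝕜 (EuclideanSpace 𝕜 n)).comp φ
  let σ := (Φ.symm : Matrix n n 𝕜 →⋆ₐ[𝕜] End 𝕜 (EuclideanSpace 𝕜 n)).comp ψ
  have hρ (a : R) : Φ (ρ a) = φ a := Φ.apply_symm_apply (φ a)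
  have hσ (a : R) : Φ (σ a) = ψ a := Φ.apply_symm_apply (ψ a)
  obtain ⟨e, he⟩ : UnitarilyEquivalent ρ σ := unitarilyEquivalent_of_trace_eq fun a => by
    rw [← trace_toMatrixOrthonormal (EuclideanSpace.basisFun n 𝕜) (ρ a),
      ← trace_toMatrixOrthonormal (EuclideanSpace.basisFun n 𝕜) (σ a)]
    exact (hρ a ▸ hσ a ▸ h a :)
  let u : End 𝕜 (EuclideanSpace 𝕜 n) := e.toLinearMap
  have hstar : star u = e.symm.toLinearMap := e.adjoint_toLinearMap_eq_symm
  refine ⟨Φ (star u), mem_unitaryGroup_iff.2 ?_, fun a => ?_⟩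
  · have hu : star u * u = 1 := by
      ext x
      simp [hstar, u]
    rw [← map_star, star_star, ← map_mul, hu, map_one]
  · have hu : σ a = u * ρ a * star u := by
      ext x
      simp [hstar, u, he]
    rw [← map_star, star_star, ← hρ, ← hσ, hu, map_mul, map_mul]

theorem map_prod_word {R S F : Type*} [Monoid R] [Star R] [Monoid S] [Star S]
    [FunLike F R S] [MonoidHomClass F R S] [StarHomClass F R S] (f : F) (x : R)
    (w : List (Fin 2)) :
    f (w.map ![x, star x]).prod = (w.map ![f x, star (f x)]).prod := by
  rw [map_list_prod, List.map_map]
  congr 2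
  ext i
  fin_cases i <;> simp [map_star]

theorem adjoin_singleton_eq_span_range_prod_word {R : Type*} [Semiring R] [StarRing R] [Algebra 𝕜 R]
    [StarModule 𝕜 R] (x : R) :
    Subalgebra.toSubmodule (StarAlgebra.adjoin 𝕜 {x}).toSubalgebra =
      Submodule.span 𝕜 (Set.range fun w : List (Fin 2) => (w.map ![x, star x]).prod) := by
  have hrange : {x} ∪ star {x} = Set.range ![x, star x] := by
    rw [range_cons, range_cons, range_empty, Set.union_empty, Set.star_singleton]
  rw [StarAlgebra.adjoin_eq_span, hrange, Submonoid.closure_eq_image_prod,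
    ← Set.range_list_map, ← Set.range_comp, Function.comp_def]

theorem trace_fst_eq_trace_snd_of_mem_adjoin {A B : Matrix n n 𝕜}
    (h : ∀ w : List (Fin 2), w ≠ [] →
      ((w.map ![A, Aᴴ]).prod).trace = ((w.map ![B, Bᴴ]).prod).trace)
    {X : Matrix n n 𝕜 × Matrix n n 𝕜} (hX : X ∈ StarAlgebra.adjoin 𝕜 {(A, B)}) :
    X.1.trace = X.2.trace := by
  have hle : Subalgebra.toSubmodule (StarAlgebra.adjoin 𝕜 {(A, B)}).toSubalgebra ≤
      LinearMap.eqLocus (traceLinearMap n 𝕜 𝕜 ∘ₗ LinearMap.fst 𝕜 _ _)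
        (traceLinearMap n 𝕜 𝕜 ∘ₗ LinearMap.snd 𝕜 _ _) := by
    rw [adjoin_singleton_eq_span_range_prod_word, Submodule.span_le]
    rintro _ ⟨w, rfl⟩
    change trace (StarAlgHom.fst 𝕜 _ _ _) = trace (StarAlgHom.snd 𝕜 _ _ _)
    rw [map_prod_word, map_prod_word]
    rcases eq_or_ne w [] with rfl | hw
    · rfl
    · exact h w hw
  exact hle hX

theorem trace_prod_word_conj {U : Matrix n n 𝕜} (hU : U ∈ unitaryGroup n 𝕜) (A : Matrix n n 𝕜)
    (w : List (Fin 2)) :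
    ((w.map ![star U * A * U, (star U * A * U)ᴴ]).prod).trace = ((w.map ![A, Aᴴ]).prod).trace := by
  let f := Unitary.conjStarAlgAut 𝕜 (Matrix n n 𝕜) (star ⟨U, hU⟩)
  have hf : f A = star U * A * U := by simp [f]
  rw [← hf, ← star_eq_conjTranspose, ← star_eq_conjTranspose, ← map_prod_word f, trace_map']

end Matrix

theorem specht_criterion_real_general {𝕜 n : Type*} [RCLike 𝕜] [Fintype n] [DecidableEq n]
    (A B : Matrix n n 𝕜) :
    (∃ U : Matrix n n 𝕜, U * Uᴴ = 1 ∧ B = Uᴴ * A * U) ↔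
    (∀ w : List (Fin 2), w ≠ [] →
        ((w.map ![A, Aᴴ]).prod).trace = ((w.map ![B, Bᴴ]).prod).trace) := by
  constructor
  · rintro ⟨U, hU, rfl⟩ w -
    exact (trace_prod_word_conj (mem_unitaryGroup_iff.2 hU) A w).symm
  · intro h
    let S := StarAlgebra.adjoin 𝕜 {(A, B)}
    obtain ⟨U, hU, hconj⟩ := exists_unitary_conj_of_trace_eq
      ((StarAlgHom.fst 𝕜 _ _).comp S.subtype) ((StarAlgHom.snd 𝕜 _ _).comp S.subtype)
      fun X => trace_fst_eq_trace_snd_of_mem_adjoin h X.2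
    exact ⟨U, mem_unitaryGroup_iff.1 hU,
      hconj ⟨(A, B), StarAlgebra.self_mem_adjoin_singleton 𝕜 (A, B)⟩⟩

/-- Specht's criterion (real version): real `n×n` matrices `A` and `B` are
orthogonally similar iff `Tr(w(A,Aᵗ)) = Tr(w(B,Bᵗ))` for every word `w` in two
noncommuting variables. -/
theorem specht_criterion_real
    (n : ℕ) (A B : Matrix (Fin n) (Fin n) ℝ) :
    (∃ O : Matrix (Fin n) (Fin n) ℝ, O * Oᵀ = 1 ∧ B = Oᵀ * A * O) ↔
    (∀ w : List (Fin 2), w ≠ [] →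
        ((w.map ![A, Aᵀ]).prod).trace = ((w.map ![B, Bᵀ]).prod).trace) := by
  simpa only [conjTranspose_eq_transpose_of_trivial] using specht_criterion_real_general A B
end
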